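/- arXiv:1502.03085 — 2 statements merged into one kernel-verified Lean document; each statement's English description precedes it below -/
import Mathlib

section
/- For every positive integer m, the following identities of polynomials with rational coefficients hold: L_{2m+1}(x) = x·P_m(x²), L_{2m}(x) = Q_m(x²), F_{2m+1}(x) = 𝒫_m(x²), and F_{2m+2}(x) = x·𝒬_m(x²). -/
open Polynomial Finset

/-- `P_m(x) = Σ_{k=0}^{m} ((2m+1)/(2k+1))·binom(m+k,2k)·x^k`. -/
noncomputable def Ppoly (m : ℕ) : Polynomial ℚ :=
  ∑ k ∈ Finset.range (m + 1),
    Polynomial.C ((2 * m + 1 : ℚ) / (2 * k + 1) * (Nat.choose (m + k) (2 * k))) * Polynomial.X ^ k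

/-- `Q_m(x) = 2 + Σ_{k=1}^{m} (m/k)·binom(m+k−1,2k−1)·x^k`. -/
noncomputable def Qpoly (m : ℕ) : Polynomial ℚ :=
  Polynomial.C 2 + ∑ k ∈ Finset.Icc 1 m,
    Polynomial.C ((m : ℚ) / k * (Nat.choose (m + k - 1) (2 * k - 1))) * Polynomial.X ^ k

/-- `𝒫_m(x) = Σ_{k=0}^{m} binom(m+k,2k)·x^k`. -/
noncomputable def calP (m : ℕ) : Polynomial ℚ :=
  ∑ k ∈ Finset.range (m + 1),
    Polynomial.C ((Nat.choose (m + k) (2 * k) : ℚ)) * Polynomial.X ^ k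

/-- `𝒬_m(x) = Σ_{k=0}^{m} binom(m+k+1,2k+1)·x^k`. -/
noncomputable def calQ (m : ℕ) : Polynomial ℚ :=
  ∑ k ∈ Finset.range (m + 1),
    Polynomial.C ((Nat.choose (m + k + 1) (2 * k + 1) : ℚ)) * Polynomial.X ^ k

/-- The Fibonacci polynomials: `F_1 = 1`, `F_2 = x`, `F_{n+1} = x·F_n + F_{n−1}`. -/
noncomputable def fibPoly : ℕ → Polynomial ℚ
  | 0 => 0
  | 1 => 1
  | n + 2 => Polynomial.X * fibPoly (n + 1) + fibPoly n

/-- The Lucas polynomials: `L_0 = 2`, `L_1 = x`, `L_{n+1} = x·L_n + L_{n−1}`. -/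
noncomputable def lucasPoly : ℕ → Polynomial ℚ
  | 0 => 2
  | 1 => Polynomial.X
  | n + 2 => Polynomial.X * lucasPoly (n + 1) + lucasPoly n

/-!
All Lucas identities reduce to Fibonacci ones through `L_n = 2 F_{n+1} - x F_n`. Pascal's rule shows
that `𝒫` and `𝒬` interlace under the same recurrence as the odd- and even-indexed Fibonacci
polynomials. It then remains to check `P_m = 2 𝒬_m - 𝒫_m` and `Q_m = 2 𝒫_m - x (𝒬_m - 𝒫_m)`, which
are the absorption identity `(n + 1) binom(n, k) = (k + 1) binom(n + 1, k + 1)` on coefficients.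
-/

theorem coeff_sum_C_mul_X_pow {R : Type*} [Semiring R] {s : Finset ℕ} {a : ℕ → R}
    (ha : ∀ k ∉ s, a k = 0) (k : ℕ) : (∑ i ∈ s, C (a i) * X ^ i).coeff k = a k := by
  simp only [finsetSum_coeff, coeff_C_mul_X_pow, Finset.sum_ite_eq]
  exact ite_eq_left_iff.2 fun hk ↦ (ha k hk).symm

theorem cast_choose_succ_succ_eq_div_mul {K : Type*} [Field K] [CharZero K] (n k : ℕ) :
    ((n + 1).choose (k + 1) : K) = (n + 1) / (k + 1) * n.choose k := by
  rw [div_mul_eq_mul_div, eq_div_iff (Nat.cast_add_one_ne_zero k)]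
  exact_mod_cast (Nat.add_one_mul_choose_eq n k).symm

theorem coeff_calP (m k : ℕ) : (calP m).coeff k = (m + k).choose (2 * k) := by
  refine coeff_sum_C_mul_X_pow (fun k hk ↦ ?_) k
  rw [Finset.mem_range] at hk
  rw [Nat.choose_eq_zero_of_lt (by lia), Nat.cast_zero]

theorem coeff_calQ (m k : ℕ) : (calQ m).coeff k = (m + k + 1).choose (2 * k + 1) := by
  refine coeff_sum_C_mul_X_pow (fun k hk ↦ ?_) k
  rw [Finset.mem_range] at hk
  rw [Nat.choose_eq_zero_of_lt (by lia), Nat.cast_zero]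

theorem coeff_Ppoly (m k : ℕ) :
    (Ppoly m).coeff k = (2 * m + 1) / (2 * k + 1) * (m + k).choose (2 * k) := by
  refine coeff_sum_C_mul_X_pow (a := fun k : ℕ ↦
    (2 * m + 1 : ℚ) / (2 * k + 1) * (m + k).choose (2 * k)) (fun k hk ↦ ?_) k
  rw [Finset.mem_range] at hk
  rw [Nat.choose_eq_zero_of_lt (by lia), Nat.cast_zero, mul_zero]

theorem coeff_Qpoly_zero (m : ℕ) : (Qpoly m).coeff 0 = 2 := by
  simp [Qpoly, coeff_X_pow]

theorem coeff_Qpoly_succ (m k : ℕ) :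
    (Qpoly m).coeff (k + 1) = m / (k + 1) * (m + k).choose (2 * k + 1) := by
  have vanish : ∀ k ∉ Finset.Icc 1 m,
      (m : ℚ) / k * (m + k - 1).choose (2 * k - 1) = 0 := by
    intro k hk
    rw [Finset.mem_Icc] at hk
    -- The index `0` lies outside the sum, where the coefficient formula gives `m / 0 = 0`.
    obtain rfl | hmk : k = 0 ∨ m < k := by lia
    · simp
    · rw [Nat.choose_eq_zero_of_lt (by lia), Nat.cast_zero, mul_zero]
  rw [Qpoly, coeff_add, coeff_C_succ, zero_add, coeff_sum_C_mul_X_pow vanish]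
  norm_cast

theorem coeff_calQ_sub_calP (m k : ℕ) :
    (calQ m - calP m).coeff k = (m + k).choose (2 * k + 1) := by
  rw [coeff_sub, coeff_calQ, coeff_calP, Nat.choose_succ_succ', Nat.cast_add, add_sub_cancel_left]

theorem calP_succ (m : ℕ) : calP (m + 1) = X * calQ m + calP m := by
  ext k
  cases k with
  | zero => simp [coeff_calP]
  | succ k =>
    have pascal := Nat.choose_succ_succ' (m + k + 1) (2 * k + 1)
    rw [coeff_add, coeff_X_mul, coeff_calP, coeff_calP, coeff_calQ, add_right_comm m 1 (k + 1)]
    exact_mod_cast pascal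

theorem calQ_succ (m : ℕ) : calQ (m + 1) = calP (m + 1) + calQ m := by
  ext k
  have pascal := Nat.choose_succ_succ' (m + 1 + k) (2 * k)
  rw [coeff_add, coeff_calP, coeff_calQ, coeff_calQ, add_right_comm m k 1]
  exact_mod_cast pascal

theorem Ppoly_eq_two_mul_calQ_sub_calP (m : ℕ) : Ppoly m = 2 * calQ m - calP m := by
  ext k
  rw [coeff_sub, coeff_ofNat_mul, coeff_Ppoly, coeff_calQ, coeff_calP,
    cast_choose_succ_succ_eq_div_mul]
  push_cast
  field_simp
  ring

theorem Qpoly_eq_two_mul_calP_sub_X_mul (m : ℕ) :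
    Qpoly m = 2 * calP m - X * (calQ m - calP m) := by
  ext k
  rw [coeff_sub, coeff_ofNat_mul, coeff_calP]
  cases k with
  | zero => simp [coeff_Qpoly_zero]
  | succ k =>
    rw [coeff_Qpoly_succ, coeff_X_mul, coeff_calQ_sub_calP, ← add_assoc, Nat.mul_succ,
      cast_choose_succ_succ_eq_div_mul (m + k) (2 * k + 1)]
    push_cast
    field_simp
    ring

theorem fibPoly_add_two (n : ℕ) : fibPoly (n + 2) = X * fibPoly (n + 1) + fibPoly n := rfl

theorem lucasPoly_add_two (n : ℕ) :
    lucasPoly (n + 2) = X * lucasPoly (n + 1) + lucasPoly n := rfl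

theorem lucasPoly_eq_two_mul_fibPoly_sub (n : ℕ) :
    lucasPoly n = 2 * fibPoly (n + 1) - X * fibPoly n := by
  induction n using Nat.twoStepInduction with
  | zero => simp [lucasPoly, fibPoly]
  | one =>
    simp only [lucasPoly, fibPoly]
    ring
  | more n ih ih_succ =>
    rw [lucasPoly_add_two, ih, ih_succ, fibPoly_add_two (n + 1), fibPoly_add_two n]
    ring

theorem fibPoly_two_mul_add_one_and_two_mul_add_two (m : ℕ) :
    fibPoly (2 * m + 1) = (calP m).comp (X ^ 2) ∧
    fibPoly (2 * m + 2) = X * (calQ m).comp (X ^ 2) := by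
  induction m with
  | zero => simp [fibPoly, calP, calQ]
  | succ m ih =>
    obtain ⟨ih_odd, ih_even⟩ := ih
    have odd : fibPoly (2 * (m + 1) + 1) = (calP (m + 1)).comp (X ^ 2) := by
      rw [Nat.mul_succ, fibPoly_add_two (2 * m + 1), ih_odd, ih_even, calP_succ, add_comp,
        mul_comp, X_comp]
      ring
    have even : fibPoly (2 * (m + 1) + 2) = X * (calQ (m + 1)).comp (X ^ 2) := by
      rw [fibPoly_add_two, odd, Nat.mul_succ, ih_even, calQ_succ, add_comp]
      ring
    exact ⟨odd, even⟩

theorem fibPoly_two_mul_add_one (m : ℕ) : fibPoly (2 * m + 1) = (calP m).comp (X ^ 2) :=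
  (fibPoly_two_mul_add_one_and_two_mul_add_two m).1

theorem fibPoly_two_mul_add_two (m : ℕ) : fibPoly (2 * m + 2) = X * (calQ m).comp (X ^ 2) :=
  (fibPoly_two_mul_add_one_and_two_mul_add_two m).2

theorem fibPoly_two_mul (m : ℕ) : fibPoly (2 * m) = X * (calQ m - calP m).comp (X ^ 2) := by
  rw [sub_comp, mul_sub, ← fibPoly_two_mul_add_two, ← fibPoly_two_mul_add_one, fibPoly_add_two,
    add_sub_cancel_left]

theorem lucasPoly_two_mul_add_one (m : ℕ) :
    lucasPoly (2 * m + 1) = X * (Ppoly m).comp (X ^ 2) := by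
  rw [lucasPoly_eq_two_mul_fibPoly_sub, fibPoly_two_mul_add_one, fibPoly_two_mul_add_two,
    Ppoly_eq_two_mul_calQ_sub_calP, sub_comp, mul_comp, ofNat_comp]
  ring

theorem lucasPoly_two_mul (m : ℕ) : lucasPoly (2 * m) = (Qpoly m).comp (X ^ 2) := by
  rw [lucasPoly_eq_two_mul_fibPoly_sub, fibPoly_two_mul_add_one, fibPoly_two_mul,
    Qpoly_eq_two_mul_calP_sub_X_mul]
  simp only [sub_comp, mul_comp, X_comp, ofNat_comp]
  ring

theorem stmt_1 (m : ℕ) (hm : 0 < m) :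
    lucasPoly (2 * m + 1) = Polynomial.X * (Ppoly m).comp (Polynomial.X ^ 2) ∧
    lucasPoly (2 * m) = (Qpoly m).comp (Polynomial.X ^ 2) ∧
    fibPoly (2 * m + 1) = (calP m).comp (Polynomial.X ^ 2) ∧
    fibPoly (2 * m + 2) = Polynomial.X * (calQ m).comp (Polynomial.X ^ 2) := by
  exact ⟨lucasPoly_two_mul_add_one m, lucasPoly_two_mul m, fibPoly_two_mul_add_one m,
    fibPoly_two_mul_add_two m⟩
end

section
/- Let m be a positive integer and n = 2m+1, and let θ = 2·cos(2π/n), a real algebraic number. Then the minimal polynomial of θ over ℚ divides the polynomial P_m(x−2) in ℚ[x]; moreover, if n is prime then P_m(x−2) is equal to the minimal polynomial of θ over ℚ. -/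
open Polynomial Finset Real

/-!
Put `W_m = S_m + S_{m-1}`, where `S_n(2 cos θ) sin θ = sin ((n + 1) θ)`. Then
`W_m(2 cos θ) sin θ = sin ((m + 1) θ) + sin (m θ)`, and the two terms cancel when
`(2m + 1) θ = 2π`. The recurrence for `S_n` gives
`S_{n-1}(x + 2) = ∑ k, binom(n + k, 2k + 1) x^k`, whence `P_m(x) = W_m(x + 2)`. The coefficients
`c_k` of this polynomial satisfy `(2k + 1) c_k = (2m + 1) binom(m + k, 2k)`, so it is Eisenstein
at `2m + 1` when that number is prime.
-/

theorem choose_second_difference (n k : ℕ) :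
    (n + 2).choose (k + 2) + n.choose (k + 2) = 2 * (n + 1).choose (k + 2) + n.choose k := by
  simp only [Nat.choose_succ_succ']
  ring

theorem coeff_taylor_two_chebyshevS (R : Type*) [CommRing R] (n k : ℕ) :
    (taylor 2 (Chebyshev.S R (n - 1))).coeff k = (n + k).choose (2 * k + 1) := by
  induction n using Nat.twoStepInduction generalizing k with
  | zero => simp [Nat.choose_eq_zero_of_lt (show k < 2 * k + 1 by lia)]
  | one =>
    rcases k.eq_zero_or_pos with rfl | hk
    · simp
    · simp [coeff_one, hk.ne', Nat.choose_eq_zero_of_lt (show 1 + k < 2 * k + 1 by lia)]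
  | more n ih₀ ih₁ =>
    have recurrence : taylor 2 (Chebyshev.S R ((n + 2 : ℕ) - 1)) =
        X * taylor 2 (Chebyshev.S R ((n + 1 : ℕ) - 1)) +
          C 2 * taylor 2 (Chebyshev.S R ((n + 1 : ℕ) - 1)) - taylor 2 (Chebyshev.S R (n - 1)) := by
      rw [Chebyshev.S_eq, map_sub, taylor_mul, taylor_X, add_mul]
      push_cast
      ring_nf
    rw [recurrence, coeff_sub, coeff_add, coeff_C_mul, ih₀, ih₁]
    cases k with
    | zero =>
      rw [coeff_X_mul_zero]
      push_cast [add_zero, mul_zero, zero_add, Nat.choose_one_right]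
      ring
    | succ k =>
      have pascal := congrArg (Nat.cast (R := R)) (choose_second_difference (n + k + 1) (2 * k + 1))
      rw [coeff_X_mul, ih₁]
      push_cast at pascal
      ring_nf at pascal ⊢
      linear_combination -pascal

/-- The Chebyshev polynomial of the fourth kind, rescaled so as to be monic with integral
coefficients: the polynomial with value `sin ((m + 1/2) θ) / sin (θ / 2)` at `2 cos θ`. -/
noncomputable def chebyshevW (R : Type*) [CommRing R] (m : ℤ) : R[X] :=
  Chebyshev.S R m + Chebyshev.S R (m - 1)

namespace chebyshevW

theorem eval_two_mul_cos_mul_sin (m : ℤ) (θ : ℝ) :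
    (chebyshevW ℝ m).eval (2 * cos θ) * sin θ = sin ((m + 1) * θ) + sin (m * θ) := by
  rw [chebyshevW, eval_add, add_mul, Chebyshev.S_two_mul_real_cos, Chebyshev.S_two_mul_real_cos]
  push_cast
  rw [sub_add_cancel]

theorem eval_two_mul_cos_eq_zero {m k : ℤ} {θ : ℝ} (hsin : sin θ ≠ 0)
    (hθ : (2 * m + 1) * θ = k * (2 * π)) : (chebyshevW ℝ m).eval (2 * cos θ) = 0 := by
  have reflection : (m + 1) * θ = k * (2 * π) - m * θ := by linear_combination hθ
  have cancellation := eval_two_mul_cos_mul_sin m θ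
  rw [reflection, sin_int_mul_two_pi_sub, neg_add_cancel] at cancellation
  exact (mul_eq_zero.mp cancellation).resolve_right hsin

section Coefficients

variable (R : Type*) [CommRing R]

theorem map {S : Type*} [CommRing S] (f : R →+* S) (m : ℤ) :
    (chebyshevW R m).map f = chebyshevW S m := by
  simp only [chebyshevW, Polynomial.map_add, Chebyshev.map_S]

theorem coeff_taylor_two (m k : ℕ) : (taylor 2 (chebyshevW R m)).coeff k =
    (m + k + 1).choose (2 * k + 1) + (m + k).choose (2 * k + 1) := by
  have shifted := coeff_taylor_two_chebyshevS R (m + 1) k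
  rw [Nat.cast_succ, add_sub_cancel_right, add_right_comm] at shifted
  rw [chebyshevW, map_add, coeff_add, shifted, coeff_taylor_two_chebyshevS]

theorem mul_coeff_taylor_two (m k : ℕ) :
    (2 * k + 1) * (taylor 2 (chebyshevW R m)).coeff k = (2 * m + 1) * (m + k).choose (2 * k) := by
  have absorption := congrArg (Nat.cast (R := R)) (Nat.add_one_mul_choose_eq (m + k) (2 * k))
  have pascal := congrArg (Nat.cast (R := R)) (Nat.choose_succ_succ' (m + k) (2 * k))
  push_cast at absorption pascal
  rw [coeff_taylor_two]
  linear_combination -2 * absorption - (2 * k + 1) * pascal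

theorem coeff_taylor_two_zero (m : ℕ) : (taylor 2 (chebyshevW R m)).coeff 0 = 2 * m + 1 := by
  simpa using mul_coeff_taylor_two R m 0

theorem coeff_taylor_two_self (m : ℕ) : (taylor 2 (chebyshevW R m)).coeff m = 1 := by
  rw [coeff_taylor_two, ← two_mul, Nat.choose_self, Nat.choose_succ_self, Nat.cast_one,
    Nat.cast_zero, add_zero]

theorem coeff_taylor_two_eq_zero_of_lt {m k : ℕ} (h : m < k) :
    (taylor 2 (chebyshevW R m)).coeff k = 0 := by
  rw [coeff_taylor_two, Nat.choose_eq_zero_of_lt (by lia), Nat.choose_eq_zero_of_lt (by lia),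
    Nat.cast_zero, add_zero]

theorem natDegree_taylor_two_le (m : ℕ) : (taylor 2 (chebyshevW R m)).natDegree ≤ m :=
  natDegree_le_iff_coeff_eq_zero.mpr fun _ ↦ coeff_taylor_two_eq_zero_of_lt R

theorem monic_taylor_two (m : ℕ) : (taylor 2 (chebyshevW R m)).Monic :=
  monic_of_natDegree_le_of_coeff_eq_one m (natDegree_taylor_two_le R m) (coeff_taylor_two_self R m)

theorem natDegree_taylor_two [Nontrivial R] (m : ℕ) :
    (taylor 2 (chebyshevW R m)).natDegree = m :=
  natDegree_eq_of_le_of_coeff_ne_zero (natDegree_taylor_two_le R m) <| by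
    rw [coeff_taylor_two_self]
    exact one_ne_zero

theorem monic (m : ℕ) : (chebyshevW R m).Monic := by
  rw [Monic, ← leadingCoeff_taylor (r := 2)]
  exact monic_taylor_two R m

end Coefficients

section Irreducibility

variable {m : ℕ}

theorem isEisensteinAt_taylor_two (hp : Prime (2 * m + 1 : ℤ)) :
    (taylor 2 (chebyshevW ℤ m)).IsEisensteinAt (Ideal.span {(2 * m + 1 : ℤ)}) := by
  refine (monic_taylor_two ℤ m).isEisensteinAt_of_mem_of_notMem ?_ (fun {k} hk ↦ ?_) ?_
  · rw [Ne, Ideal.span_singleton_eq_top]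
    exact hp.not_isUnit
  · rw [natDegree_taylor_two] at hk
    rw [Ideal.mem_span_singleton]
    have dvd_mul : (2 * m + 1 : ℤ) ∣ (2 * k + 1) * (taylor 2 (chebyshevW ℤ m)).coeff k := by
      rw [mul_coeff_taylor_two]
      exact dvd_mul_right _ _
    refine (hp.dvd_or_dvd dvd_mul).resolve_left fun dvd_index ↦ ?_
    have := Int.le_of_dvd (by positivity) dvd_index
    lia
  · rw [Ideal.span_singleton_pow, Ideal.mem_span_singleton, coeff_taylor_two_zero]
    rw [sq]
    exact fun sq_dvd ↦ hp.not_isUnit (hp.irreducible.squarefree _ sq_dvd)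

theorem irreducible_int (hp : (2 * m + 1).Prime) : Irreducible (chebyshevW ℤ m) := by
  have p_prime : Prime (2 * m + 1 : ℤ) := by exact_mod_cast Nat.prime_iff_prime_int.mp hp
  have m_pos : 0 < m := by
    have := hp.two_le
    lia
  refine (MulEquiv.irreducible_iff (taylorEquiv (2 : ℤ))).mp ?_
  exact (isEisensteinAt_taylor_two p_prime).irreducible
    ((Ideal.span_singleton_prime p_prime.ne_zero).mpr p_prime) (monic_taylor_two ℤ m).isPrimitive
    (m_pos.trans_eq (natDegree_taylor_two ℤ m).symm)

theorem irreducible_rat (hp : (2 * m + 1).Prime) : Irreducible (chebyshevW ℚ m) := by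
  rw [← map ℤ (algebraMap ℤ ℚ)]
  exact (monic ℤ m).irreducible_iff_irreducible_map_fraction_map.mp (irreducible_int hp)

end Irreducibility

end chebyshevW

theorem Ppoly_eq_taylor_two_chebyshevW (m : ℕ) : Ppoly m = taylor 2 (chebyshevW ℚ m) := by
  ext k
  simp only [Ppoly, finsetSum_coeff, coeff_C_mul_X_pow, Finset.sum_ite_eq, Finset.mem_range]
  split_ifs with hk
  · have coeff_relation := chebyshevW.mul_coeff_taylor_two ℚ m k
    field_simp
    linear_combination -coeff_relation
  · exact (chebyshevW.coeff_taylor_two_eq_zero_of_lt ℚ (by lia)).symm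

theorem Ppoly_comp_X_sub_two (m : ℕ) : (Ppoly m).comp (X - C 2) = chebyshevW ℚ m := by
  rw [Ppoly_eq_taylor_two_chebyshevW, sub_eq_add_neg, ← C_neg, ← taylor_apply, taylor_taylor,
    neg_add_cancel, taylor_zero]

theorem sin_two_pi_div_two_mul_add_one_pos {m : ℕ} (hm : 0 < m) :
    0 < sin (2 * π / (2 * m + 1)) := by
  have one_le_m : (1 : ℝ) ≤ m := by exact_mod_cast hm
  refine sin_pos_of_pos_of_lt_pi (by positivity) ?_
  rw [div_lt_iff₀ (by positivity)]
  nlinarith [pi_pos]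

theorem stmt_19 (m : ℕ) (hm : 0 < m) :
    minpoly ℚ (2 * Real.cos (2 * Real.pi / (2 * m + 1))) ∣
      (Ppoly m).comp (Polynomial.X - Polynomial.C 2) ∧
    (Nat.Prime (2 * m + 1) →
      (Ppoly m).comp (Polynomial.X - Polynomial.C 2) =
        minpoly ℚ (2 * Real.cos (2 * Real.pi / (2 * m + 1)))) := by
  have full_turn : (2 * (m : ℤ) + 1) * (2 * π / (2 * m + 1)) = (1 : ℤ) * (2 * π) := by
    push_cast
    field_simp
  have root : aeval (2 * cos (2 * π / (2 * m + 1))) (chebyshevW ℚ m) = 0 := by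
    rw [← eval_map_algebraMap, chebyshevW.map]
    exact chebyshevW.eval_two_mul_cos_eq_zero
      (sin_two_pi_div_two_mul_add_one_pos hm).ne' full_turn
  rw [Ppoly_comp_X_sub_two]
  exact ⟨minpoly.dvd ℚ _ root, fun hp ↦
    minpoly.eq_of_irreducible_of_monic (chebyshevW.irreducible_rat hp) root (chebyshevW.monic ℚ m)⟩
end
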